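/- arXiv:2404.12696 — 3 statements merged into one kernel-verified Lean document; each statement's English description precedes it below -/
import Mathlib

section
/- Let X ~ N_k(μ, Σ), α ∈ ℝ^k ∖ {0}, and Y := ⟨α, X⟩ with Var Y > 0. If two quantile split pairs (a,b) and (a′,b′) with 0 ≤ a < b ≤ 1 and 0 ≤ a′ < b′ ≤ 1 satisfy Var[Y | Y ∈ A(a,b)] = Var[Y | Y ∈ A(a′,b′)], then Cov[X | Y ∈ A(a,b)] = Cov[X | Y ∈ A(a′,b′)]. -/
open MeasureTheory ProbabilityTheory Filter Set

noncomputable section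

/-- Covariance of two real random variables under the measure `m`. -/
def covar {Ω : Type*} [MeasurableSpace Ω] (m : Measure Ω) (f g : Ω → ℝ) : ℝ :=
  ∫ ω, (f ω - ∫ x, f x ∂m) * (g ω - ∫ x, g x ∂m) ∂m

/-- Generalized inverse of the CDF of a measure on `ℝ`, `F⁻¹(p) = inf {y | F(y) ≥ p}`,
with values in `EReal` (`⊥` at `p = 0` and `⊤` at `p = 1` for fully supported laws). -/
def invCDF (μ : Measure ℝ) (p : ℝ) : EReal :=
  sInf ((fun x : ℝ => (x : EReal)) '' {x : ℝ | p ≤ cdf μ x})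

/-- Quantile conditioning set `A(a,b) = {y : F⁻¹(a) < y < F⁻¹(b)}`. -/
def qSet (μ : Measure ℝ) (a b : ℝ) : Set ℝ :=
  {y : ℝ | invCDF μ a < (y : EReal) ∧ (y : EReal) < invCDF μ b}

/-!
For jointly Gaussian `U`, `V`, `Y`, write `U = β Y + R` and `V = γ Y + S` with `β`, `γ` the
regression coefficients on `Y`. The residual pair `(R, S)` is uncorrelated with `Y`, hence
independent of it, so conditioning on an event `{Y ∈ A}` changes neither its law nor its
independence from `Y`. Therefore `Cov[U, V | A] - β γ Var[Y | A] = Cov[R, S]` does not depend on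
`A`. Quantile sets of an atomless law are admissible events: they are open and have positive
probability.
-/

section Quantile

variable {ν : Measure ℝ}

theorem coe_lt_invCDF {p x : ℝ} (hx : cdf ν x < p) : (x : EReal) < invCDF ν p := by
  obtain ⟨y, hy, hxy⟩ : ∃ y, cdf ν y < p ∧ x < y :=
    ((((cdf ν).right_continuous x).mono Ioi_subset_Ici_self).eventually_lt_const hx |>.and
      self_mem_nhdsWithin).exists
  refine (EReal.coe_lt_coe_iff.2 hxy).trans_le (le_sInf ?_)
  rintro _ ⟨z, hz, rfl⟩
  exact EReal.coe_le_coe_iff.2 ((monotone_cdf ν).reflect_lt (hy.trans_le hz)).le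

theorem invCDF_lt_coe {p x : ℝ} (hν : ContinuousAt (cdf ν) x) (hx : p < cdf ν x) :
    invCDF ν p < (x : EReal) := by
  obtain ⟨y, hy, hyx⟩ : ∃ y, p < cdf ν y ∧ y < x :=
    (hν.continuousWithinAt.eventually_const_lt hx |>.and
      (self_mem_nhdsWithin : Iio x ∈ nhdsWithin x (Iio x))).exists
  exact (sInf_le ⟨y, hy.le, rfl⟩ : invCDF ν p ≤ y).trans_lt (EReal.coe_lt_coe_iff.2 hyx)

theorem measurableSet_qSet (ν : Measure ℝ) (a b : ℝ) : MeasurableSet (qSet ν a b) :=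
  (isOpen_Ioo.preimage continuous_coe_real_ereal).measurableSet

theorem Ioo_zero_one_subset_range_cdf (hν : Continuous (cdf ν)) : Ioo 0 1 ⊆ range (cdf ν) :=
  fun _ hp => mem_range_of_exists_le_of_exists_ge hν
    ((tendsto_cdf_atBot ν).eventually_le_const hp.1).exists
    ((tendsto_cdf_atTop ν).eventually_const_le hp.2).exists

theorem continuous_cdf [IsProbabilityMeasure ν] [NullSingletonClass ν] : Continuous (cdf ν) := by
  refine continuous_iff_continuousAt.2 fun x => ?_
  rw [(monotone_cdf ν).continuousAt_iff_leftLim_eq_rightLim, StieltjesFunction.rightLim_eq]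
  have hjump := (cdf ν).measure_singleton x
  rw [measure_cdf, measure_singleton, eq_comm, ENNReal.ofReal_eq_zero, sub_nonpos] at hjump
  exact ((monotone_cdf ν).leftLim_le le_rfl).antisymm hjump

theorem measure_qSet_ne_zero [IsProbabilityMeasure ν] [NullSingletonClass ν] {a b : ℝ}
    (ha : 0 ≤ a) (hab : a < b) (hb : b ≤ 1) : ν (qSet ν a b) ≠ 0 := by
  obtain ⟨p, hap, hpb⟩ := exists_between hab
  obtain ⟨q, hpq, hqb⟩ := exists_between hpb
  have hrange := Ioo_zero_one_subset_range_cdf (ν := ν) continuous_cdf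
  obtain ⟨x, rfl⟩ := hrange ⟨ha.trans_lt hap, hpb.trans_le hb⟩
  obtain ⟨y, rfl⟩ := hrange ⟨ha.trans_lt (hap.trans hpq), hqb.trans_le hb⟩
  have hsub : Ioc x y ⊆ qSet ν a b := fun z hz =>
    ⟨invCDF_lt_coe continuous_cdf.continuousAt (hap.trans_le (monotone_cdf ν hz.1.le)),
      coe_lt_invCDF ((monotone_cdf ν hz.2).trans_lt hqb)⟩
  have hpos : 0 < ν (Ioc x y) := by
    rw [← measure_cdf ν, StieltjesFunction.measure_Ioc]
    exact ENNReal.ofReal_pos.2 (sub_pos.2 hpq)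
  exact (hpos.trans_le (measure_mono hsub)).ne'

end Quantile

section Conditioning

variable {Ω : Type*} [MeasurableSpace Ω] {P : Measure Ω}

theorem memLp_cond {G : Type*} [NormedAddCommGroup G] {f : Ω → G} {p : ENNReal}
    (hf : MemLp f p P) {s : Set Ω} (hs : P s ≠ 0) : MemLp f p (P[|s]) :=
  (hf.restrict s).smul_measure (ENNReal.inv_ne_top.2 hs)

theorem cond_apply_of_nullMeasurableSet {s : Set Ω} (hs : NullMeasurableSet s P) (t : Set Ω) :
    P[t | s] = (P s)⁻¹ * P (t ∩ s) := by
  rw [ProbabilityTheory.cond, Measure.smul_apply, Measure.restrict_apply₀' hs, smul_eq_mul]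

variable {E F : Type*} [MeasurableSpace E] [MeasurableSpace F] [IsFiniteMeasure P]
  {R : Ω → E} {Y : Ω → F} {A : Set F}

theorem cond_preimage_apply_of_indepFun (h : IndepFun R Y P) (hY : AEMeasurable Y P)
    (hA : MeasurableSet A) (hPA : P (Y ⁻¹' A) ≠ 0) {s : Set E} (hs : MeasurableSet s) :
    P[R ⁻¹' s | Y ⁻¹' A] = P (R ⁻¹' s) := by
  rw [cond_apply_of_nullMeasurableSet (hY.nullMeasurable hA),
    h.measure_inter_preimage_eq_mul _ _ hs hA, mul_left_comm,
    ENNReal.inv_mul_cancel hPA (measure_ne_top _ _), mul_one]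

theorem map_cond_preimage_of_indepFun (h : IndepFun R Y P) (hR : AEMeasurable R P)
    (hY : AEMeasurable Y P) (hA : MeasurableSet A) (hPA : P (Y ⁻¹' A) ≠ 0) :
    (P[|Y ⁻¹' A]).map R = P.map R := by
  ext s hs
  rw [Measure.map_apply_of_aemeasurable (hR.mono_ac cond_absolutelyContinuous) hs,
    Measure.map_apply_of_aemeasurable hR hs, cond_preimage_apply_of_indepFun h hY hA hPA hs]

theorem indepFun_cond_preimage (h : IndepFun R Y P) (hY : AEMeasurable Y P)
    (hA : MeasurableSet A) (hPA : P (Y ⁻¹' A) ≠ 0) : IndepFun R Y (P[|Y ⁻¹' A]) := by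
  refine indepFun_iff_measure_inter_preimage_eq_mul.2 fun s t hs ht => ?_
  rw [cond_preimage_apply_of_indepFun h hY hA hPA hs,
    cond_apply_of_nullMeasurableSet (hY.nullMeasurable hA),
    cond_apply_of_nullMeasurableSet (hY.nullMeasurable hA), inter_assoc, ← preimage_inter,
    h.measure_inter_preimage_eq_mul _ _ hs (ht.inter hA), mul_left_comm]

theorem covariance_cond_preimage_of_indepFun {R S : Ω → ℝ}
    (h : IndepFun (fun ω => (R ω, S ω)) Y P) (hR : AEMeasurable R P) (hS : AEMeasurable S P)
    (hY : AEMeasurable Y P) (hA : MeasurableSet A) (hPA : P (Y ⁻¹' A) ≠ 0) :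
    cov[R, S; P[|Y ⁻¹' A]] = cov[R, S; P] := by
  have hRS : AEMeasurable (fun ω => (R ω, S ω)) P := hR.prodMk hS
  have hmap (m : Measure Ω) (hm : AEMeasurable (fun ω => (R ω, S ω)) m) :
      cov[R, S; m] = cov[Prod.fst, Prod.snd; m.map fun ω => (R ω, S ω)] :=
    (covariance_map measurable_fst.aestronglyMeasurable
      measurable_snd.aestronglyMeasurable hm).symm
  rw [hmap _ (hRS.mono_ac cond_absolutelyContinuous), hmap _ hRS,
    map_cond_preimage_of_indepFun h hRS hY hA hPA]

end Conditioning

section Regression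

variable {Ω : Type*} [MeasurableSpace Ω] {P : Measure Ω} {U V Y : Ω → ℝ}

/-- The coefficient `β` of the least-squares linear regression `U ≈ β Y + const`. For degenerate `Y`
division by zero makes it `0`, which is still a solution of `Cov[U, Y] = β Var[Y]`. -/
def regressionCoeff (P : Measure Ω) (U Y : Ω → ℝ) : ℝ :=
  cov[U, Y; P] / Var[Y; P]

variable [IsFiniteMeasure P]

theorem covariance_sub_const_mul_left (hU : MemLp U 2 P) (hY : MemLp Y 2 P) (β : ℝ) :
    cov[fun ω => U ω - β * Y ω, Y; P] = cov[U, Y; P] - β * Var[Y; P] := by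
  rw [covariance_fun_sub_left hU (hY.const_mul β) hY, covariance_const_mul_left,
    covariance_self hY.aemeasurable]

theorem covariance_sub_const_mul_sub_const_mul (hU : MemLp U 2 P) (hV : MemLp V 2 P)
    (hY : MemLp Y 2 P) {β γ : ℝ} (hβ : cov[fun ω => U ω - β * Y ω, Y; P] = 0)
    (hγ : cov[fun ω => V ω - γ * Y ω, Y; P] = 0) :
    cov[fun ω => U ω - β * Y ω, fun ω => V ω - γ * Y ω; P]
      = cov[U, V; P] - β * γ * Var[Y; P] := by
  rw [covariance_sub_const_mul_left hV hY, sub_eq_zero] at hγ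
  have hR : MemLp (fun ω => U ω - β * Y ω) 2 P := hU.sub (hY.const_mul β)
  rw [covariance_fun_sub_right hR hV (hY.const_mul γ),
    covariance_const_mul_right, hβ, covariance_fun_sub_left hU (hY.const_mul β) hV,
    covariance_const_mul_left, covariance_comm Y V, hγ]
  ring

theorem covariance_eq_zero_of_variance_eq_zero (hY : MemLp Y 2 P) (hVar : Var[Y; P] = 0)
    (U : Ω → ℝ) : cov[U, Y; P] = 0 := by
  refine integral_eq_zero_of_ae ?_
  filter_upwards [ae_eq_integral_of_variance_eq_zero hY hVar] with ω hω
  simp [hω]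

theorem covariance_sub_regressionCoeff_mul (hU : MemLp U 2 P) (hY : MemLp Y 2 P) :
    cov[fun ω => U ω - regressionCoeff P U Y * Y ω, Y; P] = 0 := by
  rw [covariance_sub_const_mul_left hU hY, regressionCoeff, sub_eq_zero,
    div_mul_cancel_of_imp fun hVar => covariance_eq_zero_of_variance_eq_zero hY hVar U]

end Regression

section Gaussian

variable {Ω : Type*} [MeasurableSpace Ω] {P : Measure Ω}

theorem hasGaussianLaw_of_forall_sum {ι : Type*} [Fintype ι] {X : Ω → ι → ℝ}
    (hX : AEMeasurable X P)
    (h : ∀ c : ι → ℝ, IsGaussian (P.map fun ω => ∑ i, c i * X ω i)) : HasGaussianLaw X P where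
  isGaussian_map := by
    classical
    refine isGaussian_of_isGaussian_map fun L => ?_
    have hL : L ∘ X = fun ω => ∑ i, L (Pi.single i 1) * X ω i := by
      ext ω
      conv_lhs => rw [Function.comp_apply, pi_eq_sum_univ' (X ω)]
      simp only [map_sum, map_smul, smul_eq_mul, mul_comm]
    rw [AEMeasurable.map_map_of_aemeasurable L.continuous.aemeasurable hX, hL]
    exact h _

theorem hasGaussianLaw_prodMk_sum {ι : Type*} [Fintype ι] {X : Ω → ι → ℝ}
    (hX : HasGaussianLaw X P) (α : ι → ℝ) :
    HasGaussianLaw (fun ω => (X ω, ∑ i, α i * X ω i)) P := by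
  simpa using hX.map_fun ((ContinuousLinearMap.id ℝ (ι → ℝ)).prod
    (∑ i, α i • ContinuousLinearMap.proj (R := ℝ) (φ := fun _ => ℝ) i))

theorem indepFun_prodMk_of_covariance_eq_zero {R S Y : Ω → ℝ}
    (h : HasGaussianLaw (fun ω => ((R ω, S ω), Y ω)) P) (hR : cov[R, Y; P] = 0)
    (hS : cov[S, Y; P] = 0) : IndepFun (fun ω => (R ω, S ω)) Y P := by
  refine h.indepFun_of_covariance_strongDual fun L M => ?_
  have := h.isProbabilityMeasure
  have hL : L ∘ (fun ω => (R ω, S ω))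
      = (fun ω => L (1, 0) * R ω) + fun ω => L (0, 1) * S ω := by
    ext ω
    have hRS : (R ω, S ω) = R ω • ((1, 0) : ℝ × ℝ) + S ω • ((0, 1) : ℝ × ℝ) := by simp
    rw [Function.comp_apply, hRS, map_add, map_smul, map_smul, smul_eq_mul, smul_eq_mul,
      mul_comm, mul_comm (S ω), Pi.add_apply]
  have hM : M ∘ Y = fun ω => M 1 * Y ω := by
    ext ω
    simpa [mul_comm] using M.map_smul (Y ω) 1
  rw [hL, hM, covariance_const_mul_right,
    covariance_add_left (h.fst.fst.memLp_two.const_mul _) (h.fst.snd.memLp_two.const_mul _)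
      h.snd.memLp_two,
    covariance_const_mul_left, covariance_const_mul_left, hR, hS, mul_zero, mul_zero, add_zero,
    mul_zero]

theorem indepFun_residuals_of_hasGaussianLaw {U V Y : Ω → ℝ}
    (h : HasGaussianLaw (fun ω => ((U ω, V ω), Y ω)) P) :
    IndepFun (fun ω => (U ω - regressionCoeff P U Y * Y ω, V ω - regressionCoeff P V Y * Y ω))
      Y P := by
  have := h.isProbabilityMeasure
  have hY := h.snd.memLp_two
  let fstCoord := ContinuousLinearMap.fst ℝ ℝ ℝ ∘L ContinuousLinearMap.fst ℝ (ℝ × ℝ) ℝ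
  let sndCoord := ContinuousLinearMap.snd ℝ ℝ ℝ ∘L ContinuousLinearMap.fst ℝ (ℝ × ℝ) ℝ
  let benchmark := ContinuousLinearMap.snd ℝ (ℝ × ℝ) ℝ
  have hresid := h.map_fun (((fstCoord - regressionCoeff P U Y • benchmark).prod
    (sndCoord - regressionCoeff P V Y • benchmark)).prod benchmark)
  exact indepFun_prodMk_of_covariance_eq_zero hresid
    (covariance_sub_regressionCoeff_mul h.fst.fst.memLp_two hY)
    (covariance_sub_regressionCoeff_mul h.fst.snd.memLp_two hY)

theorem covariance_cond_preimage_of_hasGaussianLaw {U V Y : Ω → ℝ}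
    (h : HasGaussianLaw (fun ω => ((U ω, V ω), Y ω)) P) {A : Set ℝ} (hA : MeasurableSet A)
    (hPA : P (Y ⁻¹' A) ≠ 0) :
    cov[U, V; P[|Y ⁻¹' A]] = cov[U, V; P]
      + regressionCoeff P U Y * regressionCoeff P V Y * (Var[Y; P[|Y ⁻¹' A]] - Var[Y; P]) := by
  have := h.isProbabilityMeasure
  have := cond_isProbabilityMeasure hPA
  have hU := h.fst.fst.memLp_two
  have hV := h.fst.snd.memLp_two
  have hY := h.snd.memLp_two
  set β := regressionCoeff P U Y
  set γ := regressionCoeff P V Y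
  have hR : MemLp (fun ω => U ω - β * Y ω) 2 P := hU.sub (hY.const_mul β)
  have hS : MemLp (fun ω => V ω - γ * Y ω) 2 P := hV.sub (hY.const_mul γ)
  have hYA := memLp_cond hY hPA
  have hindep : IndepFun (fun ω => (U ω - β * Y ω, V ω - γ * Y ω)) Y P :=
    indepFun_residuals_of_hasGaussianLaw h
  have hindepA := indepFun_cond_preimage hindep hY.aemeasurable hA hPA
  have hβA : cov[fun ω => U ω - β * Y ω, Y; P[|Y ⁻¹' A]] = 0 :=
    (hindepA.comp measurable_fst measurable_id).covariance_eq_zero (memLp_cond hR hPA) hYA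
  have hγA : cov[fun ω => V ω - γ * Y ω, Y; P[|Y ⁻¹' A]] = 0 :=
    (hindepA.comp measurable_snd measurable_id).covariance_eq_zero (memLp_cond hS hPA) hYA
  have hresid := covariance_cond_preimage_of_indepFun hindep hR.aemeasurable hS.aemeasurable
    hY.aemeasurable hA hPA
  rw [covariance_sub_const_mul_sub_const_mul (memLp_cond hU hPA) (memLp_cond hV hPA) hYA hβA hγA,
    covariance_sub_const_mul_sub_const_mul hU hV hY (covariance_sub_regressionCoeff_mul hU hY)
      (covariance_sub_regressionCoeff_mul hV hY)] at hresid
  linear_combination hresid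

theorem measure_preimage_qSet_ne_zero {Y : Ω → ℝ} (hY : HasGaussianLaw Y P)
    (hVar : Var[Y; P] ≠ 0) {a b : ℝ} (ha : 0 ≤ a) (hab : a < b) (hb : b ≤ 1) :
    P (Y ⁻¹' qSet (P.map Y) a b) ≠ 0 := by
  have hvar : Var[Y; P].toNNReal ≠ 0 :=
    (Real.toNNReal_pos.2 ((variance_nonneg Y P).lt_of_ne' hVar)).ne'
  have := nullSingletonClass_gaussianReal (μ := P[Y]) hvar
  rw [← Measure.map_apply_of_aemeasurable hY.aemeasurable (measurableSet_qSet _ a b),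
    hY.map_eq_gaussianReal]
  exact measure_qSet_ne_zero ha hab hb

end Gaussian

theorem conditional_covariance_eq_of_conditional_variance_eq_general
    {Ω E : Type*} [MeasurableSpace Ω] {P : Measure Ω} [NormedAddCommGroup E] [NormedSpace ℝ E]
    [MeasurableSpace E] [BorelSpace E] {X : Ω → E} {Y : Ω → ℝ}
    (h : HasGaussianLaw (fun ω => (X ω, Y ω)) P) {A A' : Set ℝ}
    (hA : MeasurableSet A) (hA' : MeasurableSet A')
    (hPA : P (Y ⁻¹' A) ≠ 0) (hPA' : P (Y ⁻¹' A') ≠ 0)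
    (hvar : Var[Y; P[|Y ⁻¹' A]] = Var[Y; P[|Y ⁻¹' A']]) (f g : StrongDual ℝ E) :
    cov[fun ω => f (X ω), fun ω => g (X ω); P[|Y ⁻¹' A]]
      = cov[fun ω => f (X ω), fun ω => g (X ω); P[|Y ⁻¹' A']] := by
  have hfg : HasGaussianLaw (fun ω => ((f (X ω), g (X ω)), Y ω)) P :=
    h.map_fun ((f.prod g).prodMap (ContinuousLinearMap.id ℝ ℝ))
  rw [covariance_cond_preimage_of_hasGaussianLaw hfg hA hPA,
    covariance_cond_preimage_of_hasGaussianLaw hfg hA' hPA', hvar]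

/-- For a Gaussian vector `X ~ N_k(μ, Σ)` with non-degenerate benchmark
`Y = ⟨α, X⟩`: if two quantile split pairs give the same conditional variance of `Y`, then
they give the same conditional covariance matrix of `X`. -/
theorem conditional_covariance_eq_of_conditional_variance_eq
    {Ω : Type*} [MeasureSpace Ω] [IsProbabilityMeasure (ℙ : Measure Ω)]
    (k : ℕ) (X : Ω → Fin k → ℝ) (hXmeas : Measurable X)
    (μ : Fin k → ℝ) (S : Matrix (Fin k) (Fin k) ℝ)
    (hGauss : ∀ c : Fin k → ℝ,
      (ℙ : Measure Ω).map (fun ω => ∑ i, c i * X ω i)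
        = gaussianReal (∑ i, c i * μ i)
            (Real.toNNReal (∑ i, ∑ j, c i * S i j * c j)))
    (α : Fin k → ℝ) (hα : α ≠ 0)
    (Y : Ω → ℝ) (hY : Y = fun ω => ∑ i, α i * X ω i)
    (hVarYpos : 0 < variance Y ℙ)
    (a b a' b' : ℝ) (ha : 0 ≤ a) (hab : a < b) (hb : b ≤ 1)
    (ha' : 0 ≤ a') (hab' : a' < b') (hb' : b' ≤ 1)
    (A A' : Set ℝ) (hA : A = qSet ((ℙ : Measure Ω).map Y) a b)
    (hA' : A' = qSet ((ℙ : Measure Ω).map Y) a' b')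
    (hvar : variance Y (ℙ[|Y ⁻¹' A]) = variance Y (ℙ[|Y ⁻¹' A'])) :
    ∀ i j, covar (ℙ[|Y ⁻¹' A]) (fun ω => X ω i) (fun ω => X ω j)
      = covar (ℙ[|Y ⁻¹' A']) (fun ω => X ω i) (fun ω => X ω j) := by
  subst hY hA hA'
  have hX : HasGaussianLaw X ℙ := hasGaussianLaw_of_forall_sum hXmeas.aemeasurable fun c => by
    rw [hGauss c]
    infer_instance
  have hXY := hasGaussianLaw_prodMk_sum hX α
  exact fun i j => conditional_covariance_eq_of_conditional_variance_eq_general hXY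
    (measurableSet_qSet _ _ _) (measurableSet_qSet _ _ _)
    (measure_preimage_qSet_ne_zero hXY.snd hVarYpos.ne' ha hab hb)
    (measure_preimage_qSet_ne_zero hXY.snd hVarYpos.ne' ha' hab' hb')
    hvar (ContinuousLinearMap.proj i) (ContinuousLinearMap.proj j)
end
end

section
/- There exists a unique q̃ ∈ (0, 1/2) such that, for a standard normal random variable V, Var[V | V < Φ⁻¹(q̃)] = Var[V | Φ⁻¹(q̃) < V < Φ⁻¹(1−q̃)]; for this q̃ one moreover has Var[V | V < Φ⁻¹(q̃)] = Var[V | Φ⁻¹(q̃) < V < Φ⁻¹(1−q̃)] = Var[V | V > Φ⁻¹(1−q̃)], and 0.198 < q̃ < 0.199. -/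
open MeasureTheory ProbabilityTheory Filter Set

noncomputable section

/-- The standard normal CDF `Φ`. -/
def stdNormalCDF : ℝ → ℝ := fun x => cdf (gaussianReal 0 1) x

/-- The standard normal quantile function `Φ⁻¹(p) = inf {x | Φ(x) ≥ p}`. -/
def stdNormalQuantile (p : ℝ) : ℝ := sInf {x : ℝ | p ≤ stdNormalCDF x}

/-!
Put `q = Φ(-a)` with `a > 0`. Integration by parts turns both conditional variances into
expressions in `a`, `φ(a)` and `Φ(-a)`, and they agree exactly when
`g(a) = Φ(-a) - φ(a) / (a + 2φ(a))` vanishes. The sign of `g'` is that of `1/4 - φ(a) (a + φ(a))`.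
Since `g` also vanishes at `0` and at `∞`, two distinct positive roots of `g` would, by Rolle's
theorem, force `φ(x) (x + φ(x))` to take the value `1/4` three times, hence to have two critical
points. These are solutions of `x (x + 2φ(x)) = 1`, whose left-hand side is strictly increasing on
`[0, ∞)`. A root is located by evaluating `g` at two points with the help of Taylor polynomials of
the exponential function.
-/

open scoped Topology NNReal

lemma lt_of_strictMonoOn_Ici_of_tendsto_atTop {α β : Type*} [LinearOrder α] [NoMaxOrder α]
    [Preorder β] [TopologicalSpace β] [ClosedIciTopology β] {f : α → β} {a : α} {l : β}
    (hf : StrictMonoOn f (Ici a)) (hlim : Tendsto f atTop (𝓝 l)) : f a < l := by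
  obtain ⟨b, hab⟩ := exists_gt a
  have : Nonempty α := ⟨a⟩
  refine (hf self_mem_Ici hab.le hab).trans_le (ge_of_tendsto hlim ?_)
  filter_upwards [eventually_ge_atTop b] with x hx
  exact hf.monotoneOn hab.le (hab.le.trans hx) hx

lemma exists_hasDerivAt_eq_zero_of_tendsto_atTop {f f' : ℝ → ℝ} {a : ℝ}
    (hf : ContinuousOn f (Ici a)) (hf' : ∀ x ∈ Ioi a, HasDerivAt f (f' x) x)
    (hlim : Tendsto f atTop (𝓝 (f a))) : ∃ c ∈ Ioi a, f' c = 0 := by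
  by_contra! hne
  have hderiv : ∀ x ∈ interior (Ici a), HasDerivWithinAt f (f' x) (interior (Ici a)) x := by
    rw [interior_Ici]
    exact fun x hx => (hf' x hx).hasDerivWithinAt
  rcases hasDerivWithinAt_forall_lt_or_forall_gt_of_forall_ne (convex_Ioi a)
    (fun x hx => (hf' x hx).hasDerivWithinAt) hne with hneg | hpos
  · have hanti := strictAntiOn_of_hasDerivWithinAt_neg (convex_Ici a) hf hderiv
      (by simpa using hneg)
    exact (lt_of_strictMonoOn_Ici_of_tendsto_atTop (β := ℝᵒᵈ) hanti.dual_right hlim).false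
  · have hmono := strictMonoOn_of_hasDerivWithinAt_pos (convex_Ici a) hf hderiv
      (by simpa using hpos)
    exact (lt_of_strictMonoOn_Ici_of_tendsto_atTop hmono hlim).false

lemma abs_integral_exp_mul_sq_sub_sum_le {c a : ℝ} (hca : |c| * a ^ 2 ≤ 1) {n : ℕ} (hn : 0 < n) :
    |(∫ t in (0 : ℝ)..a, Real.exp (c * t ^ 2))
        - ∑ k ∈ Finset.range n, c ^ k * a ^ (2 * k + 1) / (k.factorial * (2 * k + 1))|
      ≤ (|c| * a ^ 2) ^ n * (n.succ / (n.factorial * n)) * |a| := by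
  have hsum : ∑ k ∈ Finset.range n, c ^ k * a ^ (2 * k + 1) / (k.factorial * (2 * k + 1))
      = ∫ t in (0 : ℝ)..a, ∑ k ∈ Finset.range n, (c * t ^ 2) ^ k / k.factorial := by
    rw [intervalIntegral.integral_finsetSum fun k _ => by
      exact (by fun_prop : Continuous _).intervalIntegrable _ _]
    refine Finset.sum_congr rfl fun k _ => ?_
    simp only [mul_pow, ← pow_mul, mul_div_right_comm, intervalIntegral.integral_const_mul,
      integral_pow]
    push_cast
    field_simp
    simp
  rw [hsum, ← intervalIntegral.integral_sub
    ((by fun_prop : Continuous _).intervalIntegrable _ _)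
    ((by fun_prop : Continuous _).intervalIntegrable _ _), ← Real.norm_eq_abs]
  nth_rw 3 [← sub_zero a]
  refine intervalIntegral.norm_integral_le_of_norm_le_const fun t ht => ?_
  have hbound : |c * t ^ 2| ≤ |c| * a ^ 2 := by
    have hta : |t| ≤ |a| := by
      simpa using Set.abs_sub_left_of_mem_uIcc (Set.uIoc_subset_uIcc ht)
    rw [abs_mul, abs_pow, ← sq_abs a]
    gcongr
  refine (Real.exp_bound (hbound.trans hca) hn).trans ?_
  gcongr

lemma setIntegral_Ioo_eq_sub {E : Type*} [NormedAddCommGroup E] [NormedSpace ℝ E]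
    {α : Type*} [LinearOrder α] [TopologicalSpace α] [OrderClosedTopology α] [MeasurableSpace α]
    [OpensMeasurableSpace α] {μ : Measure α} [NullSingletonClass μ] {f : α → E} {a b : α}
    (hab : a ≤ b) (hf : IntegrableOn f (Iic b) μ) :
    ∫ x in Ioo a b, f x ∂μ = ∫ x in Iic b, f x ∂μ - ∫ x in Iic a, f x ∂μ := by
  rw [← integral_Ioc_eq_integral_Ioo, ← Iic_sdiff_Iic,
    setIntegral_sdiff measurableSet_Iic hf (Iic_subset_Iic.2 hab)]

section Conditioning

variable {Ω 𝓧 : Type*} {mΩ : MeasurableSpace Ω} {m𝓧 : MeasurableSpace 𝓧} {μ : Measure Ω}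

lemma map_cond_preimage {X : Ω → 𝓧} (hX : AEMeasurable X μ) {s : Set 𝓧} (hs : MeasurableSet s) :
    (μ[|X ⁻¹' s]).map X = (μ.map X)[|s] := by
  simp only [ProbabilityTheory.cond, Measure.map_smul, Measure.restrict_map_of_aemeasurable hX hs,
    Measure.map_apply_of_aemeasurable hX hs]

lemma variance_cond_preimage {X : Ω → ℝ} {ν : Measure ℝ} (hX : HasLaw X ν μ) {s : Set ℝ}
    (hs : MeasurableSet s) : Var[X; μ[|X ⁻¹' s]] = Var[id; ν[|s]] := by
  rw [← hX.map_eq, ← map_cond_preimage hX.aemeasurable hs,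
    variance_id_map (hX.aemeasurable.mono_ac cond_absolutelyContinuous)]

lemma variance_cond {X : Ω → ℝ} [IsFiniteMeasure μ] (hX : MemLp X 2 μ) {s : Set Ω}
    (hs : μ s ≠ 0) :
    Var[X; μ[|s]]
      = (∫ ω in s, X ω ^ 2 ∂μ) / μ.real s - ((∫ ω in s, X ω ∂μ) / μ.real s) ^ 2 := by
  have := cond_isProbabilityMeasure hs
  have hX' : MemLp X 2 (μ[|s]) := (hX.restrict s).smul_measure (ENNReal.inv_ne_top.2 hs)
  rw [variance_eq_sub hX']
  simp [ProbabilityTheory.cond, measureReal_def, div_eq_inv_mul]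

lemma variance_cond_Iio_neg_eq_variance_cond_Ioi {ν : Measure ℝ} [ν.IsNegInvariant] (a : ℝ) :
    Var[id; ν[|Iio (-a)]] = Var[id; ν[|Ioi a]] := by
  have hneg : HasLaw (fun x => -x) ν ν := ⟨by fun_prop, Measure.map_neg_eq_self ν⟩
  have h := variance_cond_preimage hneg (measurableSet_Iio (a := -a))
  have hpre : (fun x : ℝ => -x) ⁻¹' Iio (-a) = Ioi a := by ext; simp
  rw [← h, variance_fun_neg, hpre]
  rfl

end Conditioning

section Gaussian

variable {m : ℝ} {v : ℝ≥0}

lemma hasDerivAt_gaussianPDFReal (m : ℝ) (v : ℝ≥0) (x : ℝ) :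
    HasDerivAt (gaussianPDFReal m v) (-((x - m) / v) * gaussianPDFReal m v x) x := by
  have hexponent : HasDerivAt (fun x => -(x - m) ^ 2 / (2 * v)) (-((x - m) / v)) x := by
    convert! ((((hasDerivAt_id x).sub_const m).pow 2).neg).div_const (2 * (v : ℝ)) using 1
    simp [neg_div, mul_div_mul_left]
  convert! hexponent.exp.const_mul (√(2 * Real.pi * v))⁻¹ using 1
  rw [gaussianPDFReal]
  ring

lemma continuous_gaussianPDFReal (m : ℝ) (v : ℝ≥0) : Continuous (gaussianPDFReal m v) :=
  continuous_iff_continuousAt.2 fun x => (hasDerivAt_gaussianPDFReal m v x).continuousAt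

lemma integrable_gaussianReal_iff {E : Type*} [NormedAddCommGroup E] [NormedSpace ℝ E]
    (hv : v ≠ 0) {f : ℝ → E} :
    Integrable f (gaussianReal m v) ↔ Integrable fun x => gaussianPDFReal m v x • f x := by
  simp_rw [gaussianReal_of_var_ne_zero m hv, integrable_withDensity_iff_integrable_smul'
    (measurable_gaussianPDF m v) (ae_of_all _ fun _ => gaussianPDF_lt_top), toReal_gaussianPDF]

lemma setIntegral_gaussianReal_eq_setIntegral_smul {E : Type*} [NormedAddCommGroup E]
    [NormedSpace ℝ E] (hv : v ≠ 0) (f : ℝ → E) {s : Set ℝ} (hs : MeasurableSet s) :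
    ∫ x in s, f x ∂gaussianReal m v = ∫ x in s, gaussianPDFReal m v x • f x := by
  simp_rw [gaussianReal_of_var_ne_zero m hv, setIntegral_withDensity_eq_setIntegral_toReal_smul
    (measurable_gaussianPDF m v) (ae_of_all _ fun _ => gaussianPDF_lt_top) f hs,
    toReal_gaussianPDF]

lemma cdf_gaussianReal_sub_cdf (hv : v ≠ 0) (a b : ℝ) :
    cdf (gaussianReal m v) b - cdf (gaussianReal m v) a
      = ∫ x in a..b, gaussianPDFReal m v x := by
  have hint := integrable_gaussianPDFReal m v
  have hcdf (c : ℝ) : cdf (gaussianReal m v) c = ∫ x in Iic c, gaussianPDFReal m v x := by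
    rw [cdf_eq_real, measureReal_def, gaussianReal_apply_eq_integral m hv, ENNReal.toReal_ofReal]
    exact integral_nonneg (gaussianPDFReal_nonneg m v)
  rw [hcdf, hcdf, intervalIntegral.integral_Iic_sub_Iic hint.integrableOn hint.integrableOn]

lemma hasDerivAt_cdf_gaussianReal (hv : v ≠ 0) (x : ℝ) :
    HasDerivAt (cdf (gaussianReal m v)) (gaussianPDFReal m v x) x := by
  have hcont := continuous_gaussianPDFReal m v
  convert! (hcont.integral_hasStrictDerivAt 0 x).hasDerivAt.const_add (cdf (gaussianReal m v) 0)
    using 1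
  ext y
  rw [← cdf_gaussianReal_sub_cdf hv]
  ring

lemma strictMono_cdf_gaussianReal (hv : v ≠ 0) : StrictMono (cdf (gaussianReal m v)) :=
  strictMono_of_hasDerivAt_pos (hasDerivAt_cdf_gaussianReal hv)
    fun x => gaussianPDFReal_pos m v x hv

/- Stein's identity, with the boundary term produced by truncation. -/
lemma setIntegral_Iic_gaussianReal_deriv_sub {f f' : ℝ → ℝ} (hv : v ≠ 0)
    (hf : ∀ x, HasDerivAt f (f' x) x)
    (hint : Integrable (fun x => f' x - (x - m) / v * f x) (gaussianReal m v))
    (hlim : Tendsto (fun x => f x * gaussianPDFReal m v x) atBot (𝓝 0)) (b : ℝ) :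
    ∫ x in Iic b, (f' x - (x - m) / v * f x) ∂gaussianReal m v = f b * gaussianPDFReal m v b := by
  have hderiv (x : ℝ) : HasDerivAt (fun x => f x * gaussianPDFReal m v x)
      (gaussianPDFReal m v x • (f' x - (x - m) / v * f x)) x := by
    convert! (hf x).mul (hasDerivAt_gaussianPDFReal m v x) using 1
    rw [smul_eq_mul]
    ring
  rw [setIntegral_gaussianReal_eq_setIntegral_smul hv _ measurableSet_Iic,
    integral_Iic_of_hasDerivAt_of_tendsto' (fun x _ => hderiv x)
      ((integrable_gaussianReal_iff hv).1 hint).integrableOn hlim, sub_zero]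

instance isNegInvariant_gaussianReal_zero (v : ℝ≥0) : (gaussianReal 0 v).IsNegInvariant :=
  ⟨gaussianReal_map_neg.trans (by rw [neg_zero])⟩

end Gaussian

/-- The standard normal density `φ`. -/
abbrev stdNormalPDF : ℝ → ℝ := gaussianPDFReal 0 1

local notation "φ" => stdNormalPDF
local notation "Φ" => stdNormalCDF
local notation "γ" => gaussianReal 0 1

lemma stdNormalPDF_eq (x : ℝ) : φ x = (√(2 * Real.pi))⁻¹ * Real.exp (-(1 / 2) * x ^ 2) := by
  simp [gaussianPDFReal, div_eq_inv_mul]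

lemma stdNormalPDF_neg (x : ℝ) : φ (-x) = φ x := by
  simp [stdNormalPDF_eq]

lemma stdNormalPDF_pos (x : ℝ) : 0 < φ x := gaussianPDFReal_pos 0 1 x one_ne_zero

lemma hasDerivAt_stdNormalPDF (x : ℝ) : HasDerivAt φ (-x * φ x) x := by
  simpa using hasDerivAt_gaussianPDFReal 0 1 x

lemma tendsto_pow_mul_stdNormalPDF_cocompact (n : ℕ) :
    Tendsto (fun x => x ^ n * φ x) (cocompact ℝ) (𝓝 0) := by
  rw [tendsto_zero_iff_abs_tendsto_zero]
  have h := (tendsto_rpow_abs_mul_exp_neg_mul_sq_cocompact (half_pos one_pos) n).const_mul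
    (√(2 * Real.pi))⁻¹
  rw [mul_zero] at h
  refine h.congr fun x => ?_
  simp only [Function.comp_apply, stdNormalPDF_eq, abs_mul, abs_pow, Real.abs_exp,
    Real.rpow_natCast]
  rw [abs_of_nonneg (by positivity : 0 ≤ (√(2 * Real.pi))⁻¹)]
  ring

lemma tendsto_pow_mul_stdNormalPDF_atBot (n : ℕ) :
    Tendsto (fun x => x ^ n * φ x) atBot (𝓝 0) :=
  (tendsto_pow_mul_stdNormalPDF_cocompact n).mono_left atBot_le_cocompact

lemma tendsto_stdNormalPDF_atTop : Tendsto φ atTop (𝓝 0) := by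
  simpa using (tendsto_pow_mul_stdNormalPDF_cocompact 0).mono_left atTop_le_cocompact

lemma hasDerivAt_stdNormalCDF (x : ℝ) : HasDerivAt Φ (φ x) x :=
  hasDerivAt_cdf_gaussianReal one_ne_zero x

lemma strictMono_stdNormalCDF : StrictMono Φ := strictMono_cdf_gaussianReal one_ne_zero

lemma continuous_stdNormalCDF : Continuous Φ :=
  continuous_iff_continuousAt.2 fun x => (hasDerivAt_stdNormalCDF x).continuousAt

lemma stdNormalCDF_pos (x : ℝ) : 0 < Φ x :=
  (cdf_nonneg _ (x - 1)).trans_lt (strictMono_stdNormalCDF (sub_one_lt x))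

lemma stdNormalCDF_neg (x : ℝ) : Φ (-x) = 1 - Φ x := by
  have := nullSingletonClass_gaussianReal (μ := 0) one_ne_zero
  simp only [stdNormalCDF, cdf_eq_real]
  rw [← probReal_compl_eq_one_sub measurableSet_Iic, compl_Iic, ← neg_Ici, measureReal_def,
    Measure.measure_neg, ← measureReal_def, measureReal_congr Ioi_ae_eq_Ici]

lemma stdNormalCDF_zero : Φ 0 = 1 / 2 := by
  linarith [neg_zero (G := ℝ) ▸ stdNormalCDF_neg 0]

lemma stdNormalQuantile_stdNormalCDF (x : ℝ) : stdNormalQuantile (Φ x) = x := by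
  simp only [stdNormalQuantile, strictMono_stdNormalCDF.le_iff_le]
  exact csInf_Ici

lemma exists_stdNormalCDF_neg_eq {q : ℝ} (hq : q ∈ Ioo (0 : ℝ) (1 / 2)) :
    ∃ a, 0 < a ∧ Φ (-a) = q := by
  obtain ⟨x, rfl⟩ : q ∈ range Φ := by
    refine mem_range_of_exists_le_of_exists_ge continuous_stdNormalCDF ?_ ⟨0, ?_⟩
    · exact ((tendsto_cdf_atBot γ).eventually_le_const hq.1).exists
    · exact stdNormalCDF_zero ▸ hq.2.le
  refine ⟨-x, neg_pos.2 (strictMono_stdNormalCDF.lt_iff_lt.1 ?_), by rw [neg_neg]⟩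
  exact stdNormalCDF_zero ▸ hq.2

lemma measureReal_Iic_stdGaussian (b : ℝ) : (γ).real (Iic b) = Φ b :=
  (cdf_eq_real γ b).symm

lemma integrable_id_stdGaussian : Integrable (fun x => x) γ :=
  (memLp_id_gaussianReal 1).integrable le_rfl

lemma integrable_sq_stdGaussian : Integrable (fun x => x ^ 2) γ :=
  (memLp_id_gaussianReal 2).integrable_sq

lemma setIntegral_Iic_stdGaussian_id (b : ℝ) : ∫ x in Iic b, x ∂γ = -φ b := by
  have h := setIntegral_Iic_gaussianReal_deriv_sub (m := 0) (f := fun _ => 1) one_ne_zero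
    (fun x => hasDerivAt_const x 1) (by simpa using integrable_id_stdGaussian.fun_neg)
    (by simpa using tendsto_pow_mul_stdNormalPDF_atBot 0) b
  simp only [sub_zero, NNReal.coe_one, div_one, mul_one, zero_sub, one_mul] at h
  rw [stdNormalPDF, ← h, integral_neg, neg_neg]

lemma setIntegral_Iic_stdGaussian_sq (b : ℝ) : ∫ x in Iic b, x ^ 2 ∂γ = Φ b - b * φ b := by
  have h := setIntegral_Iic_gaussianReal_deriv_sub (m := 0) one_ne_zero hasDerivAt_id
    (by simpa [← sq] using (integrable_const 1).sub' integrable_sq_stdGaussian)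
    (by simpa using tendsto_pow_mul_stdNormalPDF_atBot 1) b
  simp only [sub_zero, NNReal.coe_one, div_one, id_eq, ← sq] at h
  rw [integral_sub (integrable_const 1) integrable_sq_stdGaussian.integrableOn, setIntegral_const,
    measureReal_Iic_stdGaussian, smul_eq_mul, mul_one] at h
  linarith

/-- The variance gap at `a`: for `a > 0` it is a positive multiple of the variance of a standard
normal variable conditioned on `(-∞, -a)` minus that conditioned on `(-a, a)`. The multiple is
chosen so that no product of `Φ` and `φ` occurs and one differentiation eliminates `Φ`. -/
def varianceGap (a : ℝ) : ℝ := Φ (-a) - φ a / (a + 2 * φ a)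

lemma variance_cond_Iio_stdGaussian (b : ℝ) :
    Var[id; γ[|Iio b]] = 1 - b * φ b / Φ b - (φ b / Φ b) ^ 2 := by
  have := nullSingletonClass_gaussianReal (μ := 0) one_ne_zero
  have hmass : (γ).real (Iio b) = Φ b := by
    rw [measureReal_congr Iio_ae_eq_Iic, measureReal_Iic_stdGaussian]
  have hpos := stdNormalCDF_pos b
  rw [variance_cond (memLp_id_gaussianReal 2) ((measureReal_ne_zero_iff).1 (hmass ▸ hpos.ne')),
    hmass]
  simp only [id_eq, ← integral_Iic_eq_integral_Iio, setIntegral_Iic_stdGaussian_id,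
    setIntegral_Iic_stdGaussian_sq]
  field_simp

lemma variance_cond_Ioo_neg_stdGaussian {a : ℝ} (ha : 0 < a) :
    Var[id; γ[|Ioo (-a) a]] = 1 - 2 * a * φ a / (Φ a - Φ (-a)) := by
  have := nullSingletonClass_gaussianReal (μ := 0) one_ne_zero
  have hlt : -a < a := by linarith
  have hne := (sub_pos.2 (strictMono_stdNormalCDF hlt)).ne'
  have hmass : (γ).real (Ioo (-a) a) = Φ a - Φ (-a) := by
    simpa [measureReal_Iic_stdGaussian] using
      setIntegral_Ioo_eq_sub hlt.le (integrable_const (μ := γ) (1 : ℝ)).integrableOn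
  have hmean : ∫ x in Ioo (-a) a, x ∂γ = 0 := by
    rw [setIntegral_Ioo_eq_sub hlt.le integrable_id_stdGaussian.integrableOn,
      setIntegral_Iic_stdGaussian_id, setIntegral_Iic_stdGaussian_id, stdNormalPDF_neg, sub_self]
  have hsq : ∫ x in Ioo (-a) a, x ^ 2 ∂γ = Φ a - Φ (-a) - 2 * a * φ a := by
    rw [setIntegral_Ioo_eq_sub hlt.le integrable_sq_stdGaussian.integrableOn,
      setIntegral_Iic_stdGaussian_sq, setIntegral_Iic_stdGaussian_sq, stdNormalPDF_neg]
    ring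
  rw [variance_cond (memLp_id_gaussianReal 2) ((measureReal_ne_zero_iff).1 (hmass ▸ hne)), hmass]
  simp only [id_eq, hmean, hsq, zero_div, sub_div _ (_ * _), div_self hne]
  ring

lemma variance_cond_Iio_neg_sub_variance_cond_Ioo_neg {a : ℝ} (ha : 0 < a) :
    Var[id; γ[|Iio (-a)]] - Var[id; γ[|Ioo (-a) a]]
      = φ a * (a + 2 * φ a) / (Φ (-a) ^ 2 * (Φ a - Φ (-a))) * varianceGap a := by
  have htail := (stdNormalCDF_pos (-a)).ne'
  have hcentre := (sub_pos.2 (strictMono_stdNormalCDF (by linarith : -a < a))).ne'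
  have hφ := stdNormalPDF_pos a
  rw [variance_cond_Iio_stdGaussian, variance_cond_Ioo_neg_stdGaussian ha, stdNormalPDF_neg,
    varianceGap]
  field_simp
  linear_combination (a * φ a * Φ (-a) - φ a ^ 2) * stdNormalCDF_neg a

lemma variance_cond_Iio_neg_eq_variance_cond_Ioo_neg_iff {a : ℝ} (ha : 0 < a) :
    Var[id; γ[|Iio (-a)]] = Var[id; γ[|Ioo (-a) a]] ↔ varianceGap a = 0 := by
  have hφ := stdNormalPDF_pos a
  have htail := stdNormalCDF_pos (-a)
  have hcentre := sub_pos.2 (strictMono_stdNormalCDF (by linarith : -a < a))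
  rw [← sub_eq_zero, variance_cond_Iio_neg_sub_variance_cond_Ioo_neg ha, mul_eq_zero,
    or_iff_right (by positivity)]

lemma varianceGap_zero : varianceGap 0 = 0 := by
  have hφ := stdNormalPDF_pos 0
  rw [varianceGap, neg_zero, stdNormalCDF_zero]
  field_simp
  ring

lemma tendsto_varianceGap_atTop : Tendsto varianceGap atTop (𝓝 0) := by
  have hφ := tendsto_stdNormalPDF_atTop
  have htail : Tendsto (fun a => Φ (-a)) atTop (𝓝 0) :=
    (tendsto_cdf_atBot γ).comp tendsto_neg_atTop_atBot
  rw [← sub_zero (0 : ℝ)]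
  exact htail.sub (hφ.div_atTop (tendsto_id.atTop_add (hφ.const_mul 2)))

lemma hasDerivAt_varianceGap {a : ℝ} (ha : 0 ≤ a) :
    HasDerivAt varianceGap
      (φ a * (1 - 4 * (φ a * (a + φ a))) / (a + 2 * φ a) ^ 2) a := by
  have hφ := stdNormalPDF_pos a
  have hden : a + 2 * φ a ≠ 0 := by positivity
  have hquot := (hasDerivAt_stdNormalPDF a).fun_div
    ((hasDerivAt_id' a).fun_add ((hasDerivAt_stdNormalPDF a).const_mul 2)) hden
  convert! ((hasDerivAt_stdNormalCDF (-a)).comp a (hasDerivAt_neg a)).sub hquot using 1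
  rw [stdNormalPDF_neg]
  field_simp
  ring

lemma continuousOn_varianceGap : ContinuousOn varianceGap (Ici 0) :=
  fun _ ha => (hasDerivAt_varianceGap ha).continuousAt.continuousWithinAt

lemma hasDerivAt_stdNormalPDF_mul_add (x : ℝ) :
    HasDerivAt (fun x => φ x * (x + φ x)) (φ x * (1 - x * (x + 2 * φ x))) x := by
  have hφ := hasDerivAt_stdNormalPDF x
  convert! hφ.fun_mul ((hasDerivAt_id' x).fun_add hφ) using 1
  ring

lemma mul_stdNormalPDF_lt_half (x : ℝ) : x * φ x < 1 / 2 := by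
  have hc : (√(2 * Real.pi))⁻¹ < 1 / 2 := by
    rw [one_div, inv_lt_inv₀ (by positivity) two_pos]
    exact Real.lt_sqrt_of_sq_lt (by linarith [Real.pi_gt_three])
  have hexp : x * Real.exp (-(1 / 2) * x ^ 2) < 1 := by
    rw [neg_mul, Real.exp_neg, ← div_eq_mul_inv, div_lt_one (Real.exp_pos _)]
    nlinarith [Real.add_one_le_exp (1 / 2 * x ^ 2), sq_nonneg (x - 1)]
  rw [stdNormalPDF_eq]
  nlinarith [inv_pos.2 (Real.sqrt_pos.2 Real.two_pi_pos)]

lemma strictMono_add_two_mul_stdNormalPDF : StrictMono fun x => x + 2 * φ x :=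
  strictMono_of_hasDerivAt_pos
    (fun x => (hasDerivAt_id' x).fun_add ((hasDerivAt_stdNormalPDF x).const_mul 2))
    fun x => by linarith [mul_stdNormalPDF_lt_half x]

lemma strictMonoOn_mul_add_two_mul_stdNormalPDF :
    StrictMonoOn (fun x => x * (x + 2 * φ x)) (Ici 0) := fun x hx y _ hxy =>
  mul_lt_mul'' hxy (strictMono_add_two_mul_stdNormalPDF hxy) hx
    (add_nonneg hx (by have := stdNormalPDF_pos x; positivity))

lemma stdNormalPDF_mul_add_not_eq_thrice {x y z l : ℝ} (hx : 0 ≤ x) (hxy : x < y) (hyz : y < z)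
    (hlx : φ x * (x + φ x) = l) (hly : φ y * (y + φ y) = l) : φ z * (z + φ z) ≠ l := by
  intro hlz
  have hzero {u : ℝ} (hu : φ u * (1 - u * (u + 2 * φ u)) = 0) : u * (u + 2 * φ u) = 1 := by
    linarith [(mul_eq_zero.1 hu).resolve_left (stdNormalPDF_pos u).ne']
  have hrolle {u w : ℝ} (huw : u < w) (h : φ u * (u + φ u) = φ w * (w + φ w)) :
      ∃ c ∈ Ioo u w, c * (c + 2 * φ c) = 1 := by
    obtain ⟨c, hc, hc'⟩ := exists_hasDerivAt_eq_zero huw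
      (HasDerivAt.continuousOn fun t _ => hasDerivAt_stdNormalPDF_mul_add t) h
      fun t _ => hasDerivAt_stdNormalPDF_mul_add t
    exact ⟨c, hc, hzero hc'⟩
  obtain ⟨c, hc, hc1⟩ := hrolle hxy (hlx.trans hly.symm)
  obtain ⟨d, hd, hd1⟩ := hrolle hyz (hly.trans hlz.symm)
  have hc0 : 0 ≤ c := hx.trans hc.1.le
  have hcd : c < d := hc.2.trans hd.1
  exact (strictMonoOn_mul_add_two_mul_stdNormalPDF hc0 (hc0.trans hcd.le) hcd).ne
    (hc1.trans hd1.symm)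

lemma eq_of_varianceGap_eq_zero {a b : ℝ} (ha : 0 < a) (hb : 0 < b) (hga : varianceGap a = 0)
    (hgb : varianceGap b = 0) : a = b := by
  by_contra hne
  wlog hab : a < b generalizing a b
  · exact this hb ha hgb hga (Ne.symm hne) ((Ne.lt_or_gt hne).resolve_left hab)
  have hcrit {x : ℝ} (hx : 0 < x)
      (h : φ x * (1 - 4 * (φ x * (x + φ x))) / (x + 2 * φ x) ^ 2 = 0) :
      φ x * (x + φ x) = 1 / 4 := by
    have hφ := stdNormalPDF_pos x
    rw [div_eq_zero_iff, or_iff_left (by positivity), mul_eq_zero, or_iff_right hφ.ne'] at h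
    linarith
  have hrolle {u w : ℝ} (hu : 0 ≤ u) (huw : u < w) (h : varianceGap u = varianceGap w) :
      ∃ x ∈ Ioo u w, φ x * (x + φ x) = 1 / 4 := by
    obtain ⟨x, hx, hx'⟩ := exists_hasDerivAt_eq_zero huw
      (continuousOn_varianceGap.mono fun t ht => hu.trans ht.1) h
      fun t ht => hasDerivAt_varianceGap (hu.trans ht.1.le)
    exact ⟨x, hx, hcrit (hu.trans_lt hx.1) hx'⟩
  obtain ⟨x, hx, hlx⟩ := hrolle le_rfl ha (varianceGap_zero.trans hga.symm)
  obtain ⟨y, hy, hly⟩ := hrolle ha.le hab (hga.trans hgb.symm)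
  obtain ⟨z, hz, hz'⟩ := exists_hasDerivAt_eq_zero_of_tendsto_atTop
    (continuousOn_varianceGap.mono (Ici_subset_Ici.2 hb.le))
    (fun t ht => hasDerivAt_varianceGap (hb.le.trans (le_of_lt ht)))
    (hgb ▸ tendsto_varianceGap_atTop)
  exact stdNormalPDF_mul_add_not_eq_thrice hx.1.le (hx.2.trans hy.1) (hy.2.trans hz) hlx hly
    (hcrit (hb.trans hz) hz')

lemma inv_sqrt_two_pi_mem_Ioo : (√(2 * Real.pi))⁻¹ ∈ Ioo 0.3989422 0.3989424 := by
  have hπ := Real.pi_gt_d6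
  have hπ' := Real.pi_lt_d6
  rw [← Real.sqrt_inv]
  constructor
  · refine Real.lt_sqrt_of_sq_lt ?_
    rw [lt_inv_comm₀ (by norm_num) (by positivity)]
    norm_num
    linarith
  · rw [Real.sqrt_lt' (by norm_num), inv_lt_comm₀ (by positivity) (by norm_num)]
    norm_num
    linarith

lemma stdNormalCDF_eq_half_add (a : ℝ) :
    Φ a = 1 / 2 + (√(2 * Real.pi))⁻¹ * ∫ t in (0 : ℝ)..a, Real.exp (-(1 / 2) * t ^ 2) := by
  have h : Φ a - Φ 0 = ∫ t in (0 : ℝ)..a, φ t := cdf_gaussianReal_sub_cdf one_ne_zero 0 a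
  simp only [stdNormalPDF_eq, intervalIntegral.integral_const_mul] at h
  rw [← h, stdNormalCDF_zero]
  ring

lemma stdNormalPDF_0846_lt : φ 0.846 < 0.27894 := by
  have hc := inv_sqrt_two_pi_mem_Ioo
  have hexp := (abs_le.1 (Real.exp_bound (x := -(1 / 2) * 0.846 ^ 2) (by norm_num [abs_le])
    (n := 7) (by norm_num))).2
  norm_num [Finset.sum_range_succ, Nat.factorial, abs_of_nonneg] at hexp hc
  rw [stdNormalPDF_eq]
  norm_num
  nlinarith

lemma lt_stdNormalPDF_08487 : 0.27829 < φ 0.8487 := by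
  have hc := inv_sqrt_two_pi_mem_Ioo
  have hexp := (abs_le.1 (Real.exp_bound (x := -(1 / 2) * 0.8487 ^ 2) (by norm_num [abs_le])
    (n := 7) (by norm_num))).1
  norm_num [Finset.sum_range_succ, Nat.factorial, abs_of_nonneg] at hexp hc
  rw [stdNormalPDF_eq]
  norm_num
  nlinarith

lemma stdNormalCDF_neg_0846_mem_Ioo : Φ (-0.846) ∈ Ioo 0.19877 0.199 := by
  have hc := inv_sqrt_two_pi_mem_Ioo
  have hint := abs_le.1 (abs_integral_exp_mul_sq_sub_sum_le (c := -(1 / 2)) (a := 0.846)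
    (by norm_num [abs_le]) (n := 7) (by norm_num))
  rw [stdNormalCDF_neg, stdNormalCDF_eq_half_add]
  norm_num [Finset.sum_range_succ, Nat.factorial, abs_of_nonneg] at hint hc ⊢
  constructor <;> nlinarith

lemma stdNormalCDF_neg_08487_mem_Ioo : Φ (-0.8487) ∈ Ioo 0.198 0.198028 := by
  have hc := inv_sqrt_two_pi_mem_Ioo
  have hint := abs_le.1 (abs_integral_exp_mul_sq_sub_sum_le (c := -(1 / 2)) (a := 0.8487)
    (by norm_num [abs_le]) (n := 7) (by norm_num))
  rw [stdNormalCDF_neg, stdNormalCDF_eq_half_add]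
  norm_num [Finset.sum_range_succ, Nat.factorial, abs_of_nonneg] at hint hc ⊢
  constructor <;> nlinarith

lemma varianceGap_0846_pos : 0 < varianceGap 0.846 := by
  have hφ := stdNormalPDF_pos 0.846
  rw [varianceGap, sub_pos, div_lt_iff₀ (by positivity)]
  nlinarith [stdNormalPDF_0846_lt, stdNormalCDF_neg_0846_mem_Ioo.1]

lemma varianceGap_08487_neg : varianceGap 0.8487 < 0 := by
  have hφ := stdNormalPDF_pos 0.8487
  rw [varianceGap, sub_neg, lt_div_iff₀ (by positivity)]
  nlinarith [lt_stdNormalPDF_08487, stdNormalCDF_neg_08487_mem_Ioo.2]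

-- Numerically, `a ≈ 0.84847` and `Φ (-a) ≈ 0.19809`.
lemma exists_varianceGap_eq_zero :
    ∃ a, 0 < a ∧ varianceGap a = 0 ∧ Φ (-a) ∈ Ioo 0.198 0.199 := by
  obtain ⟨a, ⟨hlo, hhi⟩, hroot⟩ := intermediate_value_Ioo' (by norm_num)
    (continuousOn_varianceGap.mono fun _ ht => (by norm_num : (0 : ℝ) ≤ 0.846).trans ht.1)
    ⟨varianceGap_08487_neg, varianceGap_0846_pos⟩
  exact ⟨a, (by norm_num : (0 : ℝ) < 0.846).trans hlo, hroot,
    stdNormalCDF_neg_08487_mem_Ioo.1.trans (strictMono_stdNormalCDF (neg_lt_neg hhi)),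
    (strictMono_stdNormalCDF (neg_lt_neg hlo)).trans stdNormalCDF_neg_0846_mem_Ioo.2⟩

/-- There is a unique `q̃ ∈ (0, 1/2)` such that, for a standard normal
random variable `V`, `Var[V | V < Φ⁻¹(q̃)] = Var[V | Φ⁻¹(q̃) < V < Φ⁻¹(1−q̃)]`; moreover,
for this `q̃` the two conditional variances also coincide with
`Var[V | V > Φ⁻¹(1−q̃)]`, and `0.198 < q̃ < 0.199`. -/
theorem exists_unique_q_tilde
    {Ω : Type*} [MeasureSpace Ω] [IsProbabilityMeasure (ℙ : Measure Ω)]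
    (V : Ω → ℝ) (hVmeas : Measurable V)
    (hV : (ℙ : Measure Ω).map V = gaussianReal 0 1) :
    (∃! q : ℝ, q ∈ Set.Ioo (0 : ℝ) (1/2) ∧
      variance V (ℙ[|V ⁻¹' Set.Iio (stdNormalQuantile q)])
        = variance V
            (ℙ[|V ⁻¹' Set.Ioo (stdNormalQuantile q) (stdNormalQuantile (1 - q))])) ∧
    (∀ q : ℝ, q ∈ Set.Ioo (0 : ℝ) (1/2) →
      variance V (ℙ[|V ⁻¹' Set.Iio (stdNormalQuantile q)])
        = variance V
            (ℙ[|V ⁻¹' Set.Ioo (stdNormalQuantile q) (stdNormalQuantile (1 - q))]) →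
      (variance V (ℙ[|V ⁻¹' Set.Iio (stdNormalQuantile q)])
          = variance V (ℙ[|V ⁻¹' Set.Ioi (stdNormalQuantile (1 - q))])
        ∧ 0.198 < q ∧ q < 0.199)) := by
  have hlaw : HasLaw V γ ℙ := ⟨hVmeas.aemeasurable, hV⟩
  have hquantile (a : ℝ) : stdNormalQuantile (1 - Φ (-a)) = a := by
    rw [← stdNormalCDF_neg, neg_neg, stdNormalQuantile_stdNormalCDF]
  obtain ⟨a₀, ha₀, hroot, hlower, hupper⟩ := exists_varianceGap_eq_zero
  have hmem : Φ (-a₀) ∈ Ioo (0 : ℝ) (1 / 2) := ⟨by linarith, by linarith⟩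
  have hiff {q : ℝ} (hq : q ∈ Ioo (0 : ℝ) (1 / 2)) :
      Var[V; ℙ[|V ⁻¹' Iio (stdNormalQuantile q)]]
        = Var[V; ℙ[|V ⁻¹' Ioo (stdNormalQuantile q) (stdNormalQuantile (1 - q))]]
      ↔ q = Φ (-a₀) := by
    obtain ⟨a, ha, rfl⟩ := exists_stdNormalCDF_neg_eq hq
    rw [hquantile, stdNormalQuantile_stdNormalCDF, variance_cond_preimage hlaw measurableSet_Iio,
      variance_cond_preimage hlaw measurableSet_Ioo,
      variance_cond_Iio_neg_eq_variance_cond_Ioo_neg_iff ha,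
      strictMono_stdNormalCDF.injective.eq_iff, neg_inj]
    exact ⟨fun h => eq_of_varianceGap_eq_zero ha ha₀ h hroot, fun h => h ▸ hroot⟩
  refine ⟨⟨Φ (-a₀), ⟨hmem, (hiff hmem).2 rfl⟩, fun q hq => (hiff hq.1).1 hq.2⟩, fun q hq h => ?_⟩
  obtain rfl := (hiff hq).1 h
  rw [hquantile, stdNormalQuantile_stdNormalCDF, variance_cond_preimage hlaw measurableSet_Iio,
    variance_cond_preimage hlaw measurableSet_Ioi, variance_cond_Iio_neg_eq_variance_cond_Ioi]
  exact ⟨rfl, hlower, hupper⟩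
end
end

section
/- Let (X₁, X₂) be bivariate normal with correlation ρ ∈ (−1, 1) and non-degenerate benchmark Y = α₁X₁ + α₂X₂. Define V := (Y − EY)/σ(Y), U := Cov(Y, X₂)·X₁ − Cov(Y, X₁)·X₂, and W := (U − EU)/σ(U). Then: (i) σ(U) > 0, so W is well defined; (ii) V and W are independent standard normal random variables; (iii) there exist γ₁, γ₂ ∈ [−π, π) such that almost surely X_j = μ_j + σ_j·(cos(γ_j)·V + sin(γ_j)·W) for j = 1, 2; and (iv) cos(γ_j) = Cov(Y, X_j)/(σ(Y)·σ_j) and ρ = cos(γ₁ − γ₂). -/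
/-!
`V` and `W` form an orthonormal pair in the two-dimensional space of centred linear combinations of
`X₁` and `X₂`, with covariance as inner product: `U` is built so that `Cov(Y, U) = 0`, and
`Var U = Var Y · (Var X₁ · Var X₂ - Cov(X₁, X₂)²)` is positive because `|ρ| < 1`. Each `X_j` is
therefore a point of the Euclidean plane spanned by `V` and `W`, at distance `σ_j` from the origin
and polar angle `γ_j`. The inner product of two points of the plane is the product of their lengths
and the cosine of the difference of their angles; applied to `V, X_j` and to `X₁, X₂` this gives
both formulas in (iv). Independence of `V` and `W` holds because uncorrelated jointly Gaussian
variables are independent.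
-/

open MeasureTheory ProbabilityTheory Filter Set

noncomputable section

open Real (cos sin)

lemma exists_mem_Ico_sqrt_mul_cos_sin (a b t : ℝ) :
    ∃ γ ∈ Ico t (t + 2 * Real.pi), √(a ^ 2 + b ^ 2) * cos γ = a ∧ √(a ^ 2 + b ^ 2) * sin γ = b := by
  have hnorm : ‖(⟨a, b⟩ : ℂ)‖ = √(a ^ 2 + b ^ 2) := by
    rw [Complex.norm_def, Complex.normSq_mk, ← sq, ← sq]
  have hperiodic : Function.Periodic (fun θ ↦ (cos θ, sin θ)) (2 * Real.pi) := fun θ ↦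
    Prod.ext (Real.cos_add_two_pi θ) (Real.sin_add_two_pi θ)
  obtain ⟨γ, hγ, heq⟩ := hperiodic.exists_mem_Ico Real.two_pi_pos (Complex.arg ⟨a, b⟩) t
  obtain ⟨hcos, hsin⟩ := Prod.mk.inj heq
  refine ⟨γ, hγ, ?_, ?_⟩
  · rw [← hcos, ← hnorm, Complex.norm_mul_cos_arg]
  · rw [← hsin, ← hnorm, Complex.norm_mul_sin_arg]

section Covariance

variable {Ω : Type*} [MeasurableSpace Ω] {P : Measure Ω} [IsFiniteMeasure P] {X Y Z : Ω → ℝ}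

lemma covariance_linearCombination_left (hX : MemLp X 2 P) (hY : MemLp Y 2 P) (hZ : MemLp Z 2 P)
    (a b : ℝ) :
    cov[fun ω ↦ a * X ω + b * Y ω, Z; P] = a * cov[X, Z; P] + b * cov[Y, Z; P] := by
  rw [← covariance_const_mul_left, ← covariance_const_mul_left]
  exact covariance_add_left (hX.const_mul a) (hY.const_mul b) hZ

lemma covariance_linearCombination_right (hX : MemLp X 2 P) (hY : MemLp Y 2 P) (hZ : MemLp Z 2 P)
    (a b : ℝ) :
    cov[Z, fun ω ↦ a * X ω + b * Y ω; P] = a * cov[Z, X; P] + b * cov[Z, Y; P] := by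
  simp only [covariance_comm Z, covariance_linearCombination_left hX hY hZ]

end Covariance

section OrthonormalPair

variable {Ω : Type*} [MeasurableSpace Ω] {P : Measure Ω} {V W X X' : Ω → ℝ}
  {m m' s s' γ γ' : ℝ}

/-- Square-integrable random variables that are orthonormal for the covariance form, that is,
uncorrelated with unit variance. They need not be centred. -/
structure OrthonormalPair (P : Measure Ω) (V W : Ω → ℝ) : Prop where
  memLp_fst : MemLp V 2 P
  memLp_snd : MemLp W 2 P
  variance_fst : Var[V; P] = 1
  variance_snd : Var[W; P] = 1
  covariance_eq_zero : cov[V, W; P] = 0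

/-- `X` is the point with polar coordinates `(s, γ)`, relative to the origin `m`, in the plane with
coordinate vectors `V` and `W`. The equality is required at every point of the sample space, not
only almost surely. -/
def HasPolarCoordinates (V W X : Ω → ℝ) (m s γ : ℝ) : Prop :=
  ∀ ω, X ω = m + s * (cos γ * V ω + sin γ * W ω)

namespace OrthonormalPair

variable [IsProbabilityMeasure P]

lemma covariance_linearCombination (h : OrthonormalPair P V W) (m a b m' a' b' : ℝ) :
    cov[fun ω ↦ m + (a * V ω + b * W ω), fun ω ↦ m' + (a' * V ω + b' * W ω); P]
      = a * a' + b * b' := by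
  have hmem (c d : ℝ) : MemLp (fun ω ↦ c * V ω + d * W ω) 2 P :=
    (h.memLp_fst.const_mul c).add (h.memLp_snd.const_mul d)
  have hint (c d : ℝ) : Integrable (fun ω ↦ c * V ω + d * W ω) P :=
    (hmem c d).integrable one_le_two
  rw [covariance_const_add_left (hint a b), covariance_const_add_right (hint a' b'),
    covariance_linearCombination_left h.memLp_fst h.memLp_snd (hmem a' b'),
    covariance_linearCombination_right h.memLp_fst h.memLp_snd h.memLp_fst,
    covariance_linearCombination_right h.memLp_fst h.memLp_snd h.memLp_snd,
    covariance_comm W V, h.covariance_eq_zero, covariance_self h.memLp_fst.aemeasurable,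
    covariance_self h.memLp_snd.aemeasurable, h.variance_fst, h.variance_snd]
  ring

lemma variance_linearCombination (h : OrthonormalPair P V W) (m a b : ℝ) :
    Var[fun ω ↦ m + (a * V ω + b * W ω); P] = a ^ 2 + b ^ 2 := by
  have hV := h.memLp_fst.aemeasurable
  have hW := h.memLp_snd.aemeasurable
  rw [← covariance_self (by fun_prop), h.covariance_linearCombination, sq, sq]

lemma exists_hasPolarCoordinates (h : OrthonormalPair P V W) {m a b : ℝ}
    (hX : ∀ ω, X ω = m + (a * V ω + b * W ω)) (t : ℝ) :
    ∃ γ ∈ Ico t (t + 2 * Real.pi), HasPolarCoordinates V W X m √Var[X; P] γ := by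
  have hvar : Var[X; P] = a ^ 2 + b ^ 2 := by
    rw [funext hX, h.variance_linearCombination]
  obtain ⟨γ, hγ, hcos, hsin⟩ := exists_mem_Ico_sqrt_mul_cos_sin a b t
  refine ⟨γ, hγ, fun ω ↦ ?_⟩
  rw [hvar, mul_add, ← mul_assoc, ← mul_assoc, hcos, hsin, hX]

lemma covariance_fst_eq_mul_cos (h : OrthonormalPair P V W)
    (hX : HasPolarCoordinates V W X m s γ) : cov[V, X; P] = s * cos γ := by
  have hcov := h.covariance_linearCombination 0 1 0 m (s * cos γ) (s * sin γ)
  simp only [mul_assoc, ← mul_add, ← hX _, one_mul, zero_mul, zero_add, add_zero] at hcov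
  exact hcov

lemma covariance_eq_mul_cos_sub (h : OrthonormalPair P V W)
    (hX : HasPolarCoordinates V W X m s γ) (hX' : HasPolarCoordinates V W X' m' s' γ') :
    cov[X, X'; P] = s * s' * cos (γ - γ') := by
  have hcov := h.covariance_linearCombination
    m (s * cos γ) (s * sin γ) m' (s' * cos γ') (s' * sin γ')
  simp only [mul_assoc, ← mul_add, ← hX _, ← hX' _] at hcov
  rw [hcov, Real.cos_sub]
  ring

end OrthonormalPair

end OrthonormalPair

section Standardization

variable {Ω : Type*} [MeasurableSpace Ω] {P : Measure Ω} {X Y Z W : Ω → ℝ} {m s γ : ℝ}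

/-- The centred variable `X - E X` divided by the standard deviation of `X`. Division by zero makes
it vanish identically when `X` has zero variance. -/
def standardization (P : Measure Ω) (X : Ω → ℝ) : Ω → ℝ :=
  fun ω ↦ (X ω - P[X]) / √Var[X; P]

lemma sqrt_variance_mul_standardization (hpos : 0 < Var[X; P]) (ω : Ω) :
    √Var[X; P] * standardization P X ω = X ω - P[X] :=
  mul_div_cancel₀ _ (Real.sqrt_pos.2 hpos).ne'

lemma indepFun_standardization (h : IndepFun X Y P) :
    IndepFun (standardization P X) (standardization P Y) P :=
  h.comp (φ := fun x ↦ (x - ∫ ω, X ω ∂P) / √Var[X; P])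
    (ψ := fun y ↦ (y - ∫ ω, Y ω ∂P) / √Var[Y; P]) (by fun_prop) (by fun_prop)

lemma map_standardization_eq_gaussianReal (hX : HasGaussianLaw X P) (hpos : 0 < Var[X; P]) :
    P.map (standardization P X) = gaussianReal 0 1 := by
  have hlaw : HasLaw X (gaussianReal P[X] Var[X; P].toNNReal) P :=
    ⟨hX.aemeasurable, hX.map_eq_gaussianReal⟩
  refine (gaussianReal_div_const (gaussianReal_sub_const hlaw P[X]) √Var[X; P]).map_eq.trans ?_
  congr 1
  · simp
  · ext
    simp [Real.sq_sqrt hpos.le, hpos.le, hpos.ne']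

lemma memLp_standardization [IsFiniteMeasure P] (hX : MemLp X 2 P) :
    MemLp (standardization P X) 2 P := by
  unfold standardization
  simpa only [div_eq_inv_mul, Pi.sub_apply] using
    (hX.sub (memLp_const P[X])).const_mul (√Var[X; P])⁻¹

variable [IsProbabilityMeasure P]

lemma covariance_standardization_left (hX : Integrable X P) :
    cov[standardization P X, Y; P] = cov[X, Y; P] / √Var[X; P] := by
  unfold standardization
  rw [covariance_fun_div_left, covariance_sub_const_left hX]

lemma covariance_standardization_right (hY : Integrable Y P) :
    cov[X, standardization P Y; P] = cov[X, Y; P] / √Var[Y; P] := by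
  rw [covariance_comm, covariance_standardization_left hY, covariance_comm]

lemma variance_standardization (hX : MemLp X 2 P) (hpos : 0 < Var[X; P]) :
    Var[standardization P X; P] = 1 := by
  have hint := hX.integrable one_le_two
  rw [← covariance_self (memLp_standardization hX).aemeasurable,
    covariance_standardization_left hint, covariance_standardization_right hint,
    covariance_self hX.aemeasurable, div_div, Real.mul_self_sqrt hpos.le, div_self hpos.ne']

lemma orthonormalPair_standardization (hX : MemLp X 2 P) (hY : MemLp Y 2 P)
    (hXpos : 0 < Var[X; P]) (hYpos : 0 < Var[Y; P]) (hcov : cov[X, Y; P] = 0) :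
    OrthonormalPair P (standardization P X) (standardization P Y) where
  memLp_fst := memLp_standardization hX
  memLp_snd := memLp_standardization hY
  variance_fst := variance_standardization hX hXpos
  variance_snd := variance_standardization hY hYpos
  covariance_eq_zero := by
    rw [covariance_standardization_left (hX.integrable one_le_two),
      covariance_standardization_right (hY.integrable one_le_two), hcov, zero_div, zero_div]

lemma exists_hasPolarCoordinates_standardization (hX : MemLp X 2 P) (hY : MemLp Y 2 P)
    (hXpos : 0 < Var[X; P]) (hYpos : 0 < Var[Y; P]) (hcov : cov[X, Y; P] = 0) {a b : ℝ}
    (hZ : ∀ ω, Z ω = a * X ω + b * Y ω) (t : ℝ) :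
    ∃ γ ∈ Ico t (t + 2 * Real.pi),
      HasPolarCoordinates (standardization P X) (standardization P Y) Z P[Z] √Var[Z; P] γ := by
  refine (orthonormalPair_standardization hX hY hXpos hYpos hcov).exists_hasPolarCoordinates
    (a := a * √Var[X; P]) (b := b * √Var[Y; P]) (fun ω ↦ ?_) t
  have hmean : P[Z] = a * P[X] + b * P[Y] := by
    rw [funext hZ, integral_add ((hX.integrable one_le_two).const_mul a)
      ((hY.integrable one_le_two).const_mul b), integral_const_mul, integral_const_mul]
  rw [mul_assoc, mul_assoc, sqrt_variance_mul_standardization hXpos,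
    sqrt_variance_mul_standardization hYpos, hmean, hZ]
  ring

lemma cos_eq_of_hasPolarCoordinates_standardization
    (h : OrthonormalPair P (standardization P Y) W) (hY : Integrable Y P)
    (hX : HasPolarCoordinates (standardization P Y) W X m s γ) (hs : s ≠ 0) :
    cos γ = cov[Y, X; P] / (√Var[Y; P] * s) := by
  rw [← div_div, ← covariance_standardization_left hY, h.covariance_fst_eq_mul_cos hX,
    mul_div_cancel_left₀ _ hs]

end Standardization

section UncorrelatedCombination

variable {Ω : Type*} [MeasurableSpace Ω] {P : Measure Ω} {X₁ X₂ Y : Ω → ℝ} {α₁ α₂ : ℝ}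

/-- The linear combination `U` of `X₁` and `X₂` that is uncorrelated with `Y`. -/
def uncorrelatedCombination (P : Measure Ω) (Y X₁ X₂ : Ω → ℝ) : Ω → ℝ :=
  fun ω ↦ cov[Y, X₂; P] * X₁ ω - cov[Y, X₁; P] * X₂ ω

lemma uncorrelatedCombination_eq_add :
    uncorrelatedCombination P Y X₁ X₂
      = fun ω ↦ cov[Y, X₂; P] * X₁ ω + -cov[Y, X₁; P] * X₂ ω := by
  funext ω
  rw [uncorrelatedCombination, neg_mul, sub_eq_add_neg]

lemma memLp_uncorrelatedCombination (h₁ : MemLp X₁ 2 P) (h₂ : MemLp X₂ 2 P) :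
    MemLp (uncorrelatedCombination P Y X₁ X₂) 2 P :=
  (h₁.const_mul _).sub (h₂.const_mul _)

variable [IsFiniteMeasure P]

lemma covariance_uncorrelatedCombination_eq_zero (h₁ : MemLp X₁ 2 P) (h₂ : MemLp X₂ 2 P)
    (hY : MemLp Y 2 P) : cov[Y, uncorrelatedCombination P Y X₁ X₂; P] = 0 := by
  rw [uncorrelatedCombination_eq_add, covariance_linearCombination_right h₁ h₂ hY]
  ring

lemma variance_eq_add_of_eq_linearCombination (h₁ : MemLp X₁ 2 P) (h₂ : MemLp X₂ 2 P)
    (hY : Y = fun ω ↦ α₁ * X₁ ω + α₂ * X₂ ω) :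
    Var[Y; P] = α₁ * cov[Y, X₁; P] + α₂ * cov[Y, X₂; P] := by
  have hYmem : MemLp Y 2 P := hY ▸ (h₁.const_mul α₁).add (h₂.const_mul α₂)
  rw [← covariance_linearCombination_right h₁ h₂ hYmem, ← hY, covariance_self hYmem.aemeasurable]

lemma variance_uncorrelatedCombination (h₁ : MemLp X₁ 2 P) (h₂ : MemLp X₂ 2 P)
    (hY : Y = fun ω ↦ α₁ * X₁ ω + α₂ * X₂ ω) :
    Var[uncorrelatedCombination P Y X₁ X₂; P]
      = Var[Y; P] * (Var[X₁; P] * Var[X₂; P] - cov[X₁, X₂; P] ^ 2) := by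
  have hYX₁ : cov[Y, X₁; P] = α₁ * Var[X₁; P] + α₂ * cov[X₁, X₂; P] := by
    rw [hY, covariance_linearCombination_left h₁ h₂ h₁, covariance_self h₁.aemeasurable,
      covariance_comm X₂ X₁]
  have hYX₂ : cov[Y, X₂; P] = α₁ * cov[X₁, X₂; P] + α₂ * Var[X₂; P] := by
    rw [hY, covariance_linearCombination_left h₁ h₂ h₂, covariance_self h₂.aemeasurable]
  have hUX₁ : cov[uncorrelatedCombination P Y X₁ X₂, X₁; P]
      = cov[Y, X₂; P] * Var[X₁; P] - cov[Y, X₁; P] * cov[X₁, X₂; P] := by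
    rw [uncorrelatedCombination_eq_add, covariance_linearCombination_left h₁ h₂ h₁,
      covariance_self h₁.aemeasurable, covariance_comm X₂ X₁, neg_mul, sub_eq_add_neg]
  have hUX₂ : cov[uncorrelatedCombination P Y X₁ X₂, X₂; P]
      = cov[Y, X₂; P] * cov[X₁, X₂; P] - cov[Y, X₁; P] * Var[X₂; P] := by
    rw [uncorrelatedCombination_eq_add, covariance_linearCombination_left h₁ h₂ h₂,
      covariance_self h₂.aemeasurable, neg_mul, sub_eq_add_neg]
  rw [variance_eq_add_of_eq_linearCombination h₁ h₂ uncorrelatedCombination_eq_add, hUX₁, hUX₂,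
    variance_eq_add_of_eq_linearCombination h₁ h₂ hY, hYX₁, hYX₂]
  ring

lemma fst_eq_add_mul_uncorrelatedCombination (h₁ : MemLp X₁ 2 P) (h₂ : MemLp X₂ 2 P)
    (hY : Y = fun ω ↦ α₁ * X₁ ω + α₂ * X₂ ω) (hpos : 0 < Var[Y; P]) (ω : Ω) :
    X₁ ω = cov[Y, X₁; P] / Var[Y; P] * Y ω
      + α₂ / Var[Y; P] * uncorrelatedCombination P Y X₁ X₂ ω := by
  have hvar := variance_eq_add_of_eq_linearCombination h₁ h₂ hY
  have hYω := congrFun hY ω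
  unfold uncorrelatedCombination
  field_simp
  linear_combination X₁ ω * hvar - cov[Y, X₁; P] * hYω

lemma snd_eq_add_mul_uncorrelatedCombination (h₁ : MemLp X₁ 2 P) (h₂ : MemLp X₂ 2 P)
    (hY : Y = fun ω ↦ α₁ * X₁ ω + α₂ * X₂ ω) (hpos : 0 < Var[Y; P]) (ω : Ω) :
    X₂ ω = cov[Y, X₂; P] / Var[Y; P] * Y ω
      + -α₁ / Var[Y; P] * uncorrelatedCombination P Y X₁ X₂ ω := by
  have hvar := variance_eq_add_of_eq_linearCombination h₁ h₂ hY
  have hYω := congrFun hY ω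
  unfold uncorrelatedCombination
  field_simp
  linear_combination X₂ ω * hvar - cov[Y, X₂; P] * hYω

end UncorrelatedCombination

section Gaussian

variable {Ω : Type*} [MeasurableSpace Ω] {P : Measure Ω} {X Y X₁ X₂ : Ω → ℝ}
  {μ₁ μ₂ σ₁ σ₂ r α₁ α₂ : ℝ}

lemma hasGaussianLaw_prodMk_of_forall_linearCombination
    (h : ∀ a b : ℝ, HasGaussianLaw (fun ω ↦ a * X ω + b * Y ω) P) :
    HasGaussianLaw (fun ω ↦ (X ω, Y ω)) P where
  isGaussian_map := by
    have hX : AEMeasurable X P := by simpa using (h 1 0).aemeasurable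
    have hY : AEMeasurable Y P := by simpa using (h 0 1).aemeasurable
    refine isGaussian_of_map_eq_gaussianReal fun L ↦ ?_
    have hL : L ∘ (fun ω ↦ (X ω, Y ω)) = fun ω ↦ L (1, 0) * X ω + L (0, 1) * Y ω := by
      funext ω
      have hpair : (X ω, Y ω) = X ω • ((1, 0) : ℝ × ℝ) + Y ω • ((0, 1) : ℝ × ℝ) := by simp
      rw [Function.comp_apply, hpair, map_add, map_smul, map_smul, smul_eq_mul, smul_eq_mul,
        mul_comm, mul_comm (Y ω)]
    rw [AEMeasurable.map_map_of_aemeasurable (by fun_prop) (by fun_prop), hL]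
    exact ⟨_, _, (h _ _).map_eq_gaussianReal⟩

lemma hasGaussianLaw_linearCombination_prodMk (h : HasGaussianLaw (fun ω ↦ (X ω, Y ω)) P)
    (a b c d : ℝ) :
    HasGaussianLaw (fun ω ↦ (a * X ω + b * Y ω, c * X ω + d * Y ω)) P :=
  h.map_fun ((a • ContinuousLinearMap.fst ℝ ℝ ℝ + b • ContinuousLinearMap.snd ℝ ℝ ℝ).prod
    (c • ContinuousLinearMap.fst ℝ ℝ ℝ + d • ContinuousLinearMap.snd ℝ ℝ ℝ))

/-- `(X₁, X₂)` is bivariate normal with means `μ₁`, `μ₂`, variances `σ₁ ^ 2`, `σ₂ ^ 2` and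
covariance `r`, expressed by the laws of its linear combinations (Cramér–Wold). The
truncation by `Real.toNNReal` is harmless: the moments are the stated ones for every real `r`. -/
def IsBivariateNormal (P : Measure Ω) (X₁ X₂ : Ω → ℝ) (μ₁ μ₂ σ₁ σ₂ r : ℝ) : Prop :=
  ∀ c₁ c₂ : ℝ, HasLaw (fun ω ↦ c₁ * X₁ ω + c₂ * X₂ ω)
    (gaussianReal (c₁ * μ₁ + c₂ * μ₂)
      (c₁ ^ 2 * σ₁ ^ 2 + 2 * c₁ * c₂ * r + c₂ ^ 2 * σ₂ ^ 2).toNNReal) P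

namespace IsBivariateNormal

lemma hasGaussianLaw (h : IsBivariateNormal P X₁ X₂ μ₁ μ₂ σ₁ σ₂ r) :
    HasGaussianLaw (fun ω ↦ (X₁ ω, X₂ ω)) P :=
  hasGaussianLaw_prodMk_of_forall_linearCombination fun a b ↦ (h a b).hasGaussianLaw

lemma integral_fst (h : IsBivariateNormal P X₁ X₂ μ₁ μ₂ σ₁ σ₂ r) : P[X₁] = μ₁ := by
  simpa using (h 1 0).integral_eq

lemma integral_snd (h : IsBivariateNormal P X₁ X₂ μ₁ μ₂ σ₁ σ₂ r) : P[X₂] = μ₂ := by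
  simpa using (h 0 1).integral_eq

lemma variance_linearCombination (h : IsBivariateNormal P X₁ X₂ μ₁ μ₂ σ₁ σ₂ r) {c₁ c₂ : ℝ}
    (hnonneg : 0 ≤ c₁ ^ 2 * σ₁ ^ 2 + 2 * c₁ * c₂ * r + c₂ ^ 2 * σ₂ ^ 2) :
    Var[fun ω ↦ c₁ * X₁ ω + c₂ * X₂ ω; P]
      = c₁ ^ 2 * σ₁ ^ 2 + 2 * c₁ * c₂ * r + c₂ ^ 2 * σ₂ ^ 2 := by
  rw [(h c₁ c₂).variance_eq, variance_id_gaussianReal, Real.coe_toNNReal _ hnonneg]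

lemma variance_fst (h : IsBivariateNormal P X₁ X₂ μ₁ μ₂ σ₁ σ₂ r) : Var[X₁; P] = σ₁ ^ 2 := by
  simpa [sq_nonneg] using h.variance_linearCombination (c₁ := 1) (c₂ := 0)

lemma variance_snd (h : IsBivariateNormal P X₁ X₂ μ₁ μ₂ σ₁ σ₂ r) : Var[X₂; P] = σ₂ ^ 2 := by
  simpa [sq_nonneg] using h.variance_linearCombination (c₁ := 0) (c₂ := 1)

lemma covariance_eq (h : IsBivariateNormal P X₁ X₂ μ₁ μ₂ σ₁ σ₂ r) : cov[X₁, X₂; P] = r := by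
  have h₁ : MemLp X₁ 2 P := h.hasGaussianLaw.fst.memLp_two
  have h₂ : MemLp X₂ 2 P := h.hasGaussianLaw.snd.memLp_two
  have := h.hasGaussianLaw.isProbabilityMeasure
  -- Polarize with `X₁ + X₂` or `X₁ - X₂`, whichever variance is not truncated at zero.
  rcases le_total 0 r with hr | hr
  · have hvar := h.variance_linearCombination (c₁ := 1) (c₂ := 1) (by positivity)
    simp only [one_mul] at hvar
    rw [variance_fun_add h₁ h₂, h.variance_fst, h.variance_snd] at hvar
    linarith
  · have hvar := h.variance_linearCombination (c₁ := 1) (c₂ := -1) (by nlinarith)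
    simp only [one_mul, neg_one_mul, ← sub_eq_add_neg] at hvar
    rw [variance_fun_sub h₁ h₂, h.variance_fst, h.variance_snd] at hvar
    linarith

lemma hasGaussianLaw_uncorrelatedCombination (h : IsBivariateNormal P X₁ X₂ μ₁ μ₂ σ₁ σ₂ r)
    (hY : Y = fun ω ↦ α₁ * X₁ ω + α₂ * X₂ ω) :
    HasGaussianLaw (fun ω ↦ (Y ω, uncorrelatedCombination P Y X₁ X₂ ω)) P := by
  rw [uncorrelatedCombination_eq_add]
  convert hasGaussianLaw_linearCombination_prodMk h.hasGaussianLaw α₁ α₂ _ _ using 3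
  exact congrFun hY _

lemma variance_uncorrelatedCombination_pos (h : IsBivariateNormal P X₁ X₂ μ₁ μ₂ σ₁ σ₂ r)
    (hY : Y = fun ω ↦ α₁ * X₁ ω + α₂ * X₂ ω) (hpos : 0 < Var[Y; P]) (hr : |r| < σ₁ * σ₂) :
    0 < Var[uncorrelatedCombination P Y X₁ X₂; P] := by
  have := h.hasGaussianLaw.isProbabilityMeasure
  rw [variance_uncorrelatedCombination h.hasGaussianLaw.fst.memLp_two
    h.hasGaussianLaw.snd.memLp_two hY, h.variance_fst, h.variance_snd, h.covariance_eq, ← mul_pow]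
  exact mul_pos hpos (sub_pos.2 (sq_lt_sq' (abs_lt.1 hr).1 (abs_lt.1 hr).2))

lemma exists_hasPolarCoordinates (h : IsBivariateNormal P X₁ X₂ μ₁ μ₂ σ₁ σ₂ r) (hσ₁ : 0 ≤ σ₁)
    (hσ₂ : 0 ≤ σ₂) (hY : Y = fun ω ↦ α₁ * X₁ ω + α₂ * X₂ ω) (hYpos : 0 < Var[Y; P])
    (hUpos : 0 < Var[uncorrelatedCombination P Y X₁ X₂; P]) (t : ℝ) :
    ∃ γ₁ ∈ Ico t (t + 2 * Real.pi), ∃ γ₂ ∈ Ico t (t + 2 * Real.pi),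
      HasPolarCoordinates (standardization P Y)
        (standardization P (uncorrelatedCombination P Y X₁ X₂)) X₁ μ₁ σ₁ γ₁
      ∧ HasPolarCoordinates (standardization P Y)
        (standardization P (uncorrelatedCombination P Y X₁ X₂)) X₂ μ₂ σ₂ γ₂ := by
  have := h.hasGaussianLaw.isProbabilityMeasure
  have h₁ : MemLp X₁ 2 P := h.hasGaussianLaw.fst.memLp_two
  have h₂ : MemLp X₂ 2 P := h.hasGaussianLaw.snd.memLp_two
  have hYmem : MemLp Y 2 P := (h.hasGaussianLaw_uncorrelatedCombination hY).fst.memLp_two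
  have hU : MemLp (uncorrelatedCombination P Y X₁ X₂) 2 P := memLp_uncorrelatedCombination h₁ h₂
  have hcov := covariance_uncorrelatedCombination_eq_zero h₁ h₂ hYmem
  obtain ⟨γ₁, hγ₁, hpolar₁⟩ := exists_hasPolarCoordinates_standardization hYmem hU hYpos hUpos
    hcov (fst_eq_add_mul_uncorrelatedCombination h₁ h₂ hY hYpos) t
  obtain ⟨γ₂, hγ₂, hpolar₂⟩ := exists_hasPolarCoordinates_standardization hYmem hU hYpos hUpos
    hcov (snd_eq_add_mul_uncorrelatedCombination h₁ h₂ hY hYpos) t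
  rw [h.integral_fst, h.variance_fst, Real.sqrt_sq hσ₁] at hpolar₁
  rw [h.integral_snd, h.variance_snd, Real.sqrt_sq hσ₂] at hpolar₂
  exact ⟨γ₁, hγ₁, γ₂, hγ₂, hpolar₁, hpolar₂⟩

end IsBivariateNormal

end Gaussian

/-- For a bivariate normal `(X₁, X₂)` with correlation `ρ ∈ (−1,1)` and
non-degenerate benchmark `Y = α₁X₁ + α₂X₂`, setting `V = (Y − EY)/σ(Y)`,
`U = Cov(Y,X₂)·X₁ − Cov(Y,X₁)·X₂` and `W = (U − EU)/σ(U)`: (i) `σ(U) > 0`;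
(ii) `V, W` are independent standard normals; (iii) there are `γ₁, γ₂ ∈ [−π, π)` with
`X_j = μ_j + σ_j(cos γ_j · V + sin γ_j · W)` a.s.; and
(iv) `cos γ_j = Cov(Y, X_j)/(σ(Y)σ_j)` and `ρ = cos(γ₁ − γ₂)`. -/
theorem bivariate_normal_angle_decomposition
    {Ω : Type*} [MeasureSpace Ω] [IsProbabilityMeasure (ℙ : Measure Ω)]
    (X₁ X₂ : Ω → ℝ) (hX₁ : Measurable X₁) (hX₂ : Measurable X₂)
    (μ₁ μ₂ σ₁ σ₂ r ρ : ℝ) (hσ₁ : 0 < σ₁) (hσ₂ : 0 < σ₂)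
    (hρ : ρ = r / (σ₁ * σ₂)) (hρmem : ρ ∈ Set.Ioo (-1 : ℝ) 1)
    (hGauss : ∀ c₁ c₂ : ℝ,
      (ℙ : Measure Ω).map (fun ω => c₁ * X₁ ω + c₂ * X₂ ω)
        = gaussianReal (c₁ * μ₁ + c₂ * μ₂)
            (Real.toNNReal (c₁ ^ 2 * σ₁ ^ 2 + 2 * c₁ * c₂ * r + c₂ ^ 2 * σ₂ ^ 2)))
    (α₁ α₂ : ℝ) (hα : (α₁, α₂) ≠ (0, 0))
    (Y : Ω → ℝ) (hY : Y = fun ω => α₁ * X₁ ω + α₂ * X₂ ω)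
    (hVarYpos : 0 < variance Y ℙ)
    (U V W : Ω → ℝ)
    (hU : U = fun ω => covar ℙ Y X₂ * X₁ ω - covar ℙ Y X₁ * X₂ ω)
    (hV : V = fun ω => (Y ω - ∫ x, Y x ∂ℙ) / Real.sqrt (variance Y ℙ))
    (hW : W = fun ω => (U ω - ∫ x, U x ∂ℙ) / Real.sqrt (variance U ℙ)) :
    0 < Real.sqrt (variance U ℙ)
    ∧ IndepFun V W ℙ
    ∧ (ℙ : Measure Ω).map V = gaussianReal 0 1
    ∧ (ℙ : Measure Ω).map W = gaussianReal 0 1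
    ∧ ∃ γ₁ γ₂ : ℝ, γ₁ ∈ Set.Ico (-Real.pi) Real.pi ∧ γ₂ ∈ Set.Ico (-Real.pi) Real.pi
      ∧ (∀ᵐ ω ∂(ℙ : Measure Ω),
          X₁ ω = μ₁ + σ₁ * (Real.cos γ₁ * V ω + Real.sin γ₁ * W ω)
          ∧ X₂ ω = μ₂ + σ₂ * (Real.cos γ₂ * V ω + Real.sin γ₂ * W ω))
      ∧ Real.cos γ₁ = covar ℙ Y X₁ / (Real.sqrt (variance Y ℙ) * σ₁)
      ∧ Real.cos γ₂ = covar ℙ Y X₂ / (Real.sqrt (variance Y ℙ) * σ₂)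
      ∧ ρ = Real.cos (γ₁ - γ₂) := by
  -- `covar` is definitionally the covariance `cov` of Mathlib.
  obtain rfl : U = uncorrelatedCombination ℙ Y X₁ X₂ := hU
  obtain rfl : V = standardization ℙ Y := hV
  obtain rfl : W = standardization ℙ (uncorrelatedCombination ℙ Y X₁ X₂) := hW
  have hX : IsBivariateNormal ℙ X₁ X₂ μ₁ μ₂ σ₁ σ₂ r := fun c₁ c₂ ↦ ⟨by fun_prop, hGauss c₁ c₂⟩
  have hσ : 0 < σ₁ * σ₂ := mul_pos hσ₁ hσ₂
  have hr : |r| < σ₁ * σ₂ := by rwa [← div_lt_one hσ, ← abs_of_pos hσ, ← abs_div, ← hρ, abs_lt]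
  have hVarUpos := hX.variance_uncorrelatedCombination_pos hY hVarYpos hr
  have hYU := hX.hasGaussianLaw_uncorrelatedCombination hY
  have hcov := covariance_uncorrelatedCombination_eq_zero hX.hasGaussianLaw.fst.memLp_two
    hX.hasGaussianLaw.snd.memLp_two hYU.fst.memLp_two
  have hVW := orthonormalPair_standardization hYU.fst.memLp_two hYU.snd.memLp_two hVarYpos
    hVarUpos hcov
  obtain ⟨γ₁, hγ₁, γ₂, hγ₂, hpolar₁, hpolar₂⟩ :=
    hX.exists_hasPolarCoordinates hσ₁.le hσ₂.le hY hVarYpos hVarUpos (-Real.pi)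
  rw [show -Real.pi + 2 * Real.pi = Real.pi by ring] at hγ₁ hγ₂
  refine ⟨Real.sqrt_pos.2 hVarUpos,
    indepFun_standardization (hYU.indepFun_of_covariance_eq_zero hcov),
    map_standardization_eq_gaussianReal hYU.fst hVarYpos,
    map_standardization_eq_gaussianReal hYU.snd hVarUpos,
    γ₁, γ₂, hγ₁, hγ₂, ae_of_all _ fun ω ↦ ⟨hpolar₁ ω, hpolar₂ ω⟩,
    cos_eq_of_hasPolarCoordinates_standardization hVW hYU.fst.integrable hpolar₁ hσ₁.ne',
    cos_eq_of_hasPolarCoordinates_standardization hVW hYU.fst.integrable hpolar₂ hσ₂.ne', ?_⟩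
  rw [hρ, ← hX.covariance_eq, hVW.covariance_eq_mul_cos_sub hpolar₁ hpolar₂,
    mul_div_cancel_left₀ _ hσ.ne']
end
end
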